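/- arXiv:2605.22513 — 2 statements merged into one kernel-verified Lean document; each statement's English description precedes it below -/
import Mathlib

section
/- Let ℓ : ℝⁿ → ℝ be twice continuously differentiable, let γ > 0, and suppose w : ℝⁿ → ℝⁿ is differentiable and satisfies ∇ℓ(w(ω)) + γ(w(ω) − ω) = 0 for every ω ∈ ℝⁿ. Let ℓ_test : ℝⁿ → ℝ be differentiable. Fix ω ∈ ℝⁿ and set Q := Id + γ⁻¹·∇²ℓ(w(ω)); assume Q is invertible (it is automatically self-adjoint, since Hessians are). Then the composite function g(ω') := ℓ_test(w(ω')) is differentiable at ω with gradient ∇g(ω) = Q⁻¹ · ∇ℓ_test(w(ω)). -/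
open RealInnerProductSpace

/-- **Meta-gradient formula.** If `w` satisfies the stationarity condition of the inner
problem and `Q = Id + γ⁻¹ ∇²ℓ(w(ω))` is invertible, then `g(ω') = ℓ_test(w(ω'))` is
differentiable at `ω` with gradient `∇g(ω) = Q⁻¹ ∇ℓ_test(w(ω))`. -/
theorem meta_gradient_formula {n : ℕ}
    (ℓ : EuclideanSpace ℝ (Fin n) → ℝ) (hℓ : ContDiff ℝ 2 ℓ)
    (γ : ℝ) (hγ : 0 < γ)
    (w : EuclideanSpace ℝ (Fin n) → EuclideanSpace ℝ (Fin n))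
    (hw : Differentiable ℝ w)
    (hstat : ∀ ω, gradient ℓ (w ω) + γ • (w ω - ω) = 0)
    (ℓtest : EuclideanSpace ℝ (Fin n) → ℝ) (hℓtest : Differentiable ℝ ℓtest)
    (ω : EuclideanSpace ℝ (Fin n))
    (Q : EuclideanSpace ℝ (Fin n) →L[ℝ] EuclideanSpace ℝ (Fin n))
    (hQ : Q = ContinuousLinearMap.id ℝ (EuclideanSpace ℝ (Fin n))
            + γ⁻¹ • fderiv ℝ (gradient ℓ) (w ω))
    (Qinv : EuclideanSpace ℝ (Fin n) →L[ℝ] EuclideanSpace ℝ (Fin n))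
    (hQinv₁ : Q.comp Qinv = ContinuousLinearMap.id ℝ (EuclideanSpace ℝ (Fin n)))
    (hQinv₂ : Qinv.comp Q = ContinuousLinearMap.id ℝ (EuclideanSpace ℝ (Fin n))) :
    DifferentiableAt ℝ (fun ω' => ℓtest (w ω')) ω ∧
    gradient (fun ω' => ℓtest (w ω')) ω = Qinv (gradient ℓtest (w ω)) := by
  have hf1 : Differentiable ℝ (fderiv ℝ ℓ) :=
    (hℓ.fderiv_right (m := 1) (by norm_num)).differentiable (by norm_num)
  have hgrad : Differentiable ℝ (gradient ℓ) := fun x =>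
    (InnerProductSpace.toDual ℝ (EuclideanSpace ℝ (Fin n))).symm.toContinuousLinearEquiv
      |>.differentiableAt.comp x (hf1 x)
  -- symmetry of the Hessian
  have hA : ∀ z x y, ⟪fderiv ℝ (gradient ℓ) z x, y⟫ = fderiv ℝ (fderiv ℝ ℓ) z x y := by
    intro z x y
    have h1 : HasFDerivAt (fun u => ⟪gradient ℓ u, y⟫) _ z :=
      (hgrad z).hasFDerivAt.inner ℝ (hasFDerivAt_const y z)
    have h2 : HasFDerivAt (fun u => fderiv ℝ ℓ u y) _ z :=
      (hf1 z).hasFDerivAt.clm_apply (hasFDerivAt_const y z)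
    have h3 : (fun u => ⟪gradient ℓ u, y⟫) = fun u => fderiv ℝ ℓ u y := by
      funext u
      exact inner_gradient_left
    rw [h3] at h1
    have h4 := congrArg (fun L => L x) (h1.unique h2)
    simpa using h4
  have hsym : ∀ x y, ⟪Q x, y⟫ = ⟪x, Q y⟫ := by
    intro x y
    have hs : IsSymmSndFDerivAt ℝ ℓ (w ω) := hℓ.contDiffAt.isSymmSndFDerivAt (by simp)
    have h : ⟪fderiv ℝ (gradient ℓ) (w ω) x, y⟫ = ⟪x, fderiv ℝ (gradient ℓ) (w ω) y⟫ := by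
      rw [hA, real_inner_comm, hA]
      exact hs x y
    subst hQ
    simp [inner_add_left, inner_add_right, real_inner_smul_left, real_inner_smul_right, h]
  -- implicit differentiation of the stationarity condition
  have hQD : ∀ y, Q (fderiv ℝ w ω y) = y := by
    intro y
    have h1 := ((hgrad (w ω)).hasFDerivAt.comp ω (hw ω).hasFDerivAt).add
      (((hw ω).hasFDerivAt.sub (hasFDerivAt_id ω)).const_smul γ)
    have h2 : HasFDerivAt (fun u => gradient ℓ (w u) + γ • (w u - u)) _ ω := h1
    simp only [hstat] at h2
    have h3 := congrArg (fun L => γ⁻¹ • L y) (h2.unique (hasFDerivAt_const 0 ω))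
    simp [smul_smul, hγ.ne'] at h3
    subst hQ
    simp only [ContinuousLinearMap.add_apply, ContinuousLinearMap.smul_apply,
      ContinuousLinearMap.id_apply]
    rw [← sub_eq_zero, ← h3]
    abel
  have hd : HasFDerivAt (fun ω' => ℓtest (w ω')) _ ω :=
    (hℓtest (w ω)).hasFDerivAt.comp ω (hw ω).hasFDerivAt
  refine ⟨hd.differentiableAt, ext_inner_right ℝ fun y => ?_⟩
  have hp : Q (Qinv (gradient ℓtest (w ω))) = gradient ℓtest (w ω) :=
    congrArg (fun L => L (gradient ℓtest (w ω))) hQinv₁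
  rw [inner_gradient_left, hd.fderiv, ContinuousLinearMap.comp_apply, ← inner_gradient_left,
    ← hp, hsym, hQD, hp]
end

section
/- Let ℓ : ℝⁿ → ℝ be twice continuously differentiable with ∇ℓ Lipschitz with constant L ≥ 0 and ‖∇²ℓ(ψ)‖ ≤ H for all ψ ∈ ℝⁿ, and let γ > H ≥ 0. Fix ω_∞ ∈ ℝⁿ and define the regularized adaptation objective f(ψ) := ℓ(ψ) + (γ/2)‖ψ − ω_∞‖², with unique global minimizer ω̃*. Let ω_opt ∈ ℝⁿ satisfy ‖ω_opt − ω_∞‖ ≤ ρ. Starting from ψ_0 = ω_∞, run K ≥ 0 gradient-descent steps ψ_{k+1} := ψ_k − (1/(L+γ))·∇f(ψ_k) and set ω* := ψ_K. Then ℓ(ω*) − ℓ(ω_opt) ≤ γρ²/2 + ((L+γ)/2)·(1 − (γ−H)/(L+γ))^K · ‖ω_∞ − ω̃*‖². (Proposition 2, Adaptation Error, of the paper.) -/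
open RealInnerProductSpace

theorem quad_upper {E : Type*} [NormedAddCommGroup E] [InnerProductSpace ℝ E] [CompleteSpace E]
    (h : E → ℝ) (G : E → E) (hG : ∀ x, HasGradientAt h (G x) x) (C : ℝ)
    (hC : ∀ x y, ‖G x - G y‖ ≤ C * ‖x - y‖) (x v : E) :
    h (x + v) ≤ h x + inner ℝ (G x) v + C / 2 * ‖v‖ ^ 2 := by
  have hd : ∀ t : ℝ, HasDerivAt
      (fun t : ℝ => h (x + t • v) - t * inner ℝ (G x) v - C / 2 * ‖v‖ ^ 2 * t ^ 2)
      (inner ℝ (G (x + t • v)) v - inner ℝ (G x) v - C * ‖v‖ ^ 2 * t) t := by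
    intro t
    have h1 : HasDerivAt (fun t : ℝ => x + t • v) v t := by
      simpa using ((hasDerivAt_id t).smul_const v).const_add x
    have h2 := (hG (x + t • v)).hasFDerivAt.comp_hasDerivAt t h1
    have h3 := (h2.sub ((hasDerivAt_id t).mul_const (inner ℝ (G x) v))).sub
      ((hasDerivAt_pow 2 t).const_mul (C / 2 * ‖v‖ ^ 2))
    refine h3.congr_deriv ?_
    simp
    ring
  have anti : AntitoneOn
      (fun t : ℝ => h (x + t • v) - t * inner ℝ (G x) v - C / 2 * ‖v‖ ^ 2 * t ^ 2)
      (Set.Icc 0 1) := by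
    refine antitoneOn_of_deriv_nonpos (convex_Icc 0 1)
      (fun t _ => (hd t).continuousAt.continuousWithinAt)
      (fun t _ => (hd t).differentiableAt.differentiableWithinAt) ?_
    intro t ht
    rw [interior_Icc] at ht
    rw [(hd t).deriv, ← inner_sub_left]
    have h1 := real_inner_le_norm (G (x + t • v) - G x) v
    have h2 := hC (x + t • v) x
    rw [add_sub_cancel_left, norm_smul, Real.norm_of_nonneg ht.1.le] at h2
    nlinarith [mul_le_mul_of_nonneg_right h2 (norm_nonneg v)]
  have := anti (Set.left_mem_Icc.2 zero_le_one) (Set.right_mem_Icc.2 zero_le_one) zero_le_one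
  simp at this
  linarith

/-- **Adaptation Error (Proposition 2).** Under the smoothness and bounded-Hessian
assumptions with `γ > H ≥ 0`, running `K` gradient-descent steps with step size
`1/(L+γ)` on the regularized adaptation objective `f(ψ) = ℓ(ψ) + (γ/2)‖ψ − ω_∞‖²`
starting from `ψ_0 = ω_∞` yields `ω* = ψ_K` with
`ℓ(ω*) − ℓ(ω_opt) ≤ γρ²/2 + ((L+γ)/2)(1 − (γ−H)/(L+γ))^K ‖ω_∞ − ω̃*‖²`,
where `ω̃*` is the global minimizer of `f` and `‖ω_opt − ω_∞‖ ≤ ρ`. -/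
theorem adaptation_error {n : ℕ}
    (ℓ : EuclideanSpace ℝ (Fin n) → ℝ) (hℓ : ContDiff ℝ 2 ℓ)
    (L : ℝ) (hLnn : 0 ≤ L) (hLip : LipschitzWith L.toNNReal (gradient ℓ))
    (H γ : ℝ) (hH : 0 ≤ H) (hγ : H < γ)
    (hHess : ∀ ψ : EuclideanSpace ℝ (Fin n), ‖fderiv ℝ (gradient ℓ) ψ‖ ≤ H)
    (ωinf : EuclideanSpace ℝ (Fin n))
    (f : EuclideanSpace ℝ (Fin n) → ℝ)
    (hf : ∀ ψ : EuclideanSpace ℝ (Fin n), f ψ = ℓ ψ + γ / 2 * ‖ψ - ωinf‖ ^ 2)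
    (ωtil : EuclideanSpace ℝ (Fin n))
    (hmin : ∀ ψ : EuclideanSpace ℝ (Fin n), f ωtil ≤ f ψ)
    (ωopt : EuclideanSpace ℝ (Fin n)) (ρ : ℝ) (hρ : ‖ωopt - ωinf‖ ≤ ρ)
    (K : ℕ)
    (ψ : ℕ → EuclideanSpace ℝ (Fin n)) (hψ0 : ψ 0 = ωinf)
    (hiter : ∀ k : ℕ, ψ (k + 1) = ψ k - (1 / (L + γ)) • gradient f (ψ k)) :
    ℓ (ψ K) - ℓ ωopt ≤
      γ * ρ ^ 2 / 2 +
        (L + γ) / 2 * (1 - (γ - H) / (L + γ)) ^ K * ‖ωinf - ωtil‖ ^ 2 := by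
  have hγ0 : 0 < γ := lt_of_le_of_lt hH hγ
  have hM : 0 < L + γ := by linarith
  have hdiff : Differentiable ℝ ℓ := hℓ.differentiable (by norm_num)
  have hG : ∀ x, HasGradientAt ℓ (gradient ℓ x) x := fun x => (hdiff x).hasGradientAt
  have hGd : Differentiable ℝ (gradient ℓ) := by
    have h1 : Differentiable ℝ (fderiv ℝ ℓ) :=
      (hℓ.fderiv_right (m := 1) (by norm_num)).differentiable (by norm_num)
    exact (InnerProductSpace.toDual ℝ (EuclideanSpace ℝ
      (Fin n))).symm.toContinuousLinearEquiv.differentiable.comp h1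
  have hL' : ∀ x y, ‖gradient ℓ x - gradient ℓ y‖ ≤ L * ‖x - y‖ := by
    intro x y
    have := hLip.norm_sub_le x y
    rwa [Real.coe_toNNReal L hLnn] at this
  have hH' : ∀ x y, ‖gradient ℓ x - gradient ℓ y‖ ≤ H * ‖x - y‖ := fun x y =>
    convex_univ.norm_image_sub_le_of_norm_fderiv_le (fun z _ => hGd z) (fun z _ => hHess z)
      (Set.mem_univ y) (Set.mem_univ x)
  have up := quad_upper ℓ _ hG L hL'
  have low : ∀ x v, ℓ x + inner ℝ (gradient ℓ x) v - H / 2 * ‖v‖ ^ 2 ≤ ℓ (x + v) := by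
    intro x v
    have := quad_upper (fun z => - ℓ z) (fun z => - gradient ℓ z)
      (fun z => by
        rw [hasGradientAt_iff_hasFDerivAt, map_neg]
        exact (hG z).hasFDerivAt.neg) H
      (fun a b => by
        rw [neg_sub_neg, norm_sub_rev]
        exact hH' a b) x v
    rw [inner_neg_left] at this
    linarith
  have hgf : ∀ x, gradient f x = gradient ℓ x + γ • (x - ωinf) := by
    intro x
    apply HasGradientAt.gradient
    rw [hasGradientAt_iff_hasFDerivAt]
    have h1 := (((hasFDerivAt_id x).sub_const ωinf).norm_sq).const_mul (γ / 2)
    have h2 := (hG x).hasFDerivAt.add h1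
    have hfe : f = fun ψ => ℓ ψ + γ / 2 * ‖ψ - ωinf‖ ^ 2 := funext hf
    rw [hfe]
    refine h2.congr_fderiv ?_
    ext v
    simp [inner_add_left, inner_smul_left]
    ring
  have hsq : ∀ x v : EuclideanSpace ℝ (Fin n), ‖x + v - ωinf‖ ^ 2 =
      ‖x - ωinf‖ ^ 2 + 2 * inner ℝ (x - ωinf) v + ‖v‖ ^ 2 := by
    intro x v
    rw [add_sub_right_comm, norm_add_sq_real]
  have upf : ∀ x v, f (x + v) ≤ f x + inner ℝ (gradient f x) v + (L + γ) / 2 * ‖v‖ ^ 2 := by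
    intro x v
    rw [hf, hf, hgf, hsq, inner_add_left, real_inner_smul_left]
    linarith [up x v]
  have lowf : ∀ x v, f x + inner ℝ (gradient f x) v + (γ - H) / 2 * ‖v‖ ^ 2 ≤ f (x + v) := by
    intro x v
    rw [hf, hf, hgf, hsq, inner_add_left, real_inner_smul_left]
    linarith [low x v]
  have desc : ∀ x, f ωtil ≤ f x - ‖gradient f x‖ ^ 2 / (2 * (L + γ)) := by
    intro x
    have h1 := upf x (-(1 / (L + γ)) • gradient f x)
    rw [real_inner_smul_right, real_inner_self_eq_norm_sq, norm_smul, mul_pow,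
      Real.norm_eq_abs, sq_abs] at h1
    refine (hmin _).trans (h1.trans (le_of_eq ?_))
    field_simp
    ring
  have g0 : gradient f ωtil = 0 := by
    have h1 := desc ωtil
    have h2 : ‖gradient f ωtil‖ ^ 2 / (2 * (L + γ)) ≤ 0 := by linarith
    have h3 : ‖gradient f ωtil‖ ^ 2 ≤ 0 := by
      rw [div_le_iff₀ (by linarith)] at h2
      linarith
    have h4 : ‖gradient f ωtil‖ = 0 := by
      nlinarith [norm_nonneg (gradient f ωtil)]
    exact norm_eq_zero.1 h4
  have hr : 0 ≤ 1 - (γ - H) / (L + γ) := by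
    rw [sub_nonneg, div_le_one hM]
    linarith
  have step : ∀ k, ‖ψ (k + 1) - ωtil‖ ^ 2 ≤
      (1 - (γ - H) / (L + γ)) * ‖ψ k - ωtil‖ ^ 2 := by
    intro k
    have h1 := desc (ψ k)
    have h2 := lowf (ψ k) (-(ψ k - ωtil))
    rw [inner_neg_right, norm_neg, neg_sub, add_sub_cancel] at h2
    have h3 : ‖gradient f (ψ k)‖ ^ 2 / (2 * (L + γ)) + (γ - H) / 2 * ‖ψ k - ωtil‖ ^ 2 ≤
        inner ℝ (gradient f (ψ k)) (ψ k - ωtil) := by linarith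
    rw [hiter, sub_right_comm, norm_sub_sq_real, real_inner_smul_right, norm_smul, mul_pow,
      Real.norm_eq_abs, sq_abs, real_inner_comm]
    have h4 := mul_le_mul_of_nonneg_left h3 (show 0 ≤ 2 / (L + γ) by positivity)
    have e1 : 2 / (L + γ) * (‖gradient f (ψ k)‖ ^ 2 / (2 * (L + γ)) +
        (γ - H) / 2 * ‖ψ k - ωtil‖ ^ 2) = (1 / (L + γ)) ^ 2 * ‖gradient f (ψ k)‖ ^ 2 +
        (γ - H) / (L + γ) * ‖ψ k - ωtil‖ ^ 2 := by
      field_simp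
    have e2 : ∀ a : ℝ, 2 / (L + γ) * a = 2 * (1 / (L + γ) * a) := fun a => by ring
    rw [e1, e2] at h4
    linarith
  have dist : ∀ k, ‖ψ k - ωtil‖ ^ 2 ≤
      (1 - (γ - H) / (L + γ)) ^ k * ‖ωinf - ωtil‖ ^ 2 := by
    intro k
    induction k with
    | zero => simp [hψ0]
    | succ k ih =>
      refine (step k).trans ((mul_le_mul_of_nonneg_left ih hr).trans (le_of_eq ?_))
      ring
  have h1 := upf ωtil (ψ K - ωtil)
  rw [g0, inner_zero_left, add_sub_cancel] at h1
  have h2 := mul_le_mul_of_nonneg_left (dist K) (show 0 ≤ (L + γ) / 2 by positivity)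
  have h3 := hmin ωopt
  rw [hf ωopt] at h3
  have h4 : ‖ωopt - ωinf‖ ^ 2 ≤ ρ ^ 2 := pow_le_pow_left₀ (norm_nonneg _) hρ 2
  have h5 := mul_le_mul_of_nonneg_left h4 (show 0 ≤ γ / 2 by positivity)
  have h6 := hf (ψ K)
  have h7 : 0 ≤ γ / 2 * ‖ψ K - ωinf‖ ^ 2 := by positivity
  linarith
end
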